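/- Let t be a positive integer and let G be a graph that is both (P_3 + P_1)-free and K_{t,t}-free. Then tree-α(G) ≤ t. -/

import Mathlib

open SimpleGraph
/-- The independence number of the subgraph of `G` induced by `s`:
the supremum of sizes of independent sets contained in `s`. -/
noncomputable def setIndepNum {V : Type*} (G : SimpleGraph V) (s : Set V) : ℕ :=
  sSup {n | ∃ t : Finset V, ↑t ⊆ s ∧ (∀ u ∈ t, ∀ v ∈ t, u ≠ v → ¬ G.Adj u v) ∧ t.card = n}

/-- A tree decomposition of a graph `G`. -/
structure TreeDecomp {V : Type*} (G : SimpleGraph V) where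
  ι : Type
  T : SimpleGraph ι
  tree : T.IsTree
  bag : ι → Set V
  bag_vert : ∀ v : V, ∃ i, v ∈ bag i
  bag_edge : ∀ u v : V, G.Adj u v → ∃ i, u ∈ bag i ∧ v ∈ bag i
  bag_conn : ∀ v : V, (T.induce {i | v ∈ bag i}).Connected

/-- The tree-independence number of `G`: the least `n` such that `G` has a tree
decomposition all of whose bags induce subgraphs with independence number at most `n`. -/
noncomputable def treeIndepNum {V : Type*} (G : SimpleGraph V) : ℕ :=
  sInf {n | ∃ D : TreeDecomp G, ∀ i, setIndepNum G (D.bag i) ≤ n}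

/-- `G` is `H`-free: no induced subgraph of `G` is isomorphic to `H`. -/
def IndFree {W V : Type*} (H : SimpleGraph W) (G : SimpleGraph V) : Prop :=
  IsEmpty (H ↪g G)

/-- The induced biclique number of `G`: the largest `s` such that `G` contains an induced
subgraph isomorphic to `K_{s,s}`. -/
noncomputable def ibn {V : Type*} (G : SimpleGraph V) : ℕ :=
  sSup {s | Nonempty (completeBipartiteGraph (Fin s) (Fin s) ↪g G)}

/-- `P_3 + P_1`: the disjoint union of a path on three vertices and an isolated vertex. -/
def P3plusP1 : SimpleGraph (Fin 3 ⊕ Fin 1) := pathGraph 3 ⊕g (⊥ : SimpleGraph (Fin 1))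

/-- A `P3plusP1`-free graph has no induced path `a - b - c` with a vertex `d` anticomplete to it. -/
lemma IndFree.false_of_path {V : Type*} {G : SimpleGraph V} (h : IndFree P3plusP1 G)
    {a b c d : V} (hab : G.Adj a b) (hbc : G.Adj b c) (hne : a ≠ c) (hac : ¬ G.Adj a c)
    (hda : ¬ G.Adj d a) (hdb : ¬ G.Adj d b) (hdc : ¬ G.Adj d c) : False := by
  have hda' : d ≠ a := by rintro rfl; exact hdb hab
  have hdb' : d ≠ b := by rintro rfl; exact hda hab.symm
  have hdc' : d ≠ c := by rintro rfl; exact hdb hbc.symm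
  have hab' := hab.ne
  have hbc' := hbc.ne
  have := hab.symm
  have := hbc.symm
  have hca : ¬ G.Adj c a := fun h => hac h.symm
  have had : ¬ G.Adj a d := fun h => hda h.symm
  have hbd : ¬ G.Adj b d := fun h => hdb h.symm
  have hcd : ¬ G.Adj c d := fun h => hdc h.symm
  refine h.false ⟨⟨Sum.elim ![a, b, c] ![d], ?_⟩, ?_⟩
  · rintro (i | i) (j | j) <;> fin_cases i <;> fin_cases j <;>
      simp [hne, hab', hbc', hda', hdb', hdc', hne.symm, hab'.symm, hbc'.symm, hda'.symm,
        hdb'.symm, hdc'.symm]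
  · intro i j
    change G.Adj (Sum.elim ![a, b, c] ![d] i) (Sum.elim ![a, b, c] ![d] j) ↔ _
    rcases i with i | i <;> rcases j with j | j <;> fin_cases i <;> fin_cases j <;>
      simp [P3plusP1, pathGraph_adj, *]

/-- A graph without induced `K_{t,t}` has no two independent sets of size at least `t`
that are complete to each other. -/
lemma IndFree.false_of_biclique {V : Type*} {G : SimpleGraph V} {t : ℕ}
    (h : IndFree (completeBipartiteGraph (Fin t) (Fin t)) G) {A B : Finset V}
    (hA : t ≤ A.card) (hB : t ≤ B.card)
    (iA : ∀ u ∈ A, ∀ v ∈ A, u ≠ v → ¬ G.Adj u v) (iB : ∀ u ∈ B, ∀ v ∈ B, u ≠ v → ¬ G.Adj u v)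
    (hAB : ∀ u ∈ A, ∀ v ∈ B, G.Adj u v) : False := by
  obtain ⟨f⟩ : Nonempty (Fin t ↪ A) := Function.Embedding.nonempty_of_card_le (by simpa using hA)
  obtain ⟨g⟩ : Nonempty (Fin t ↪ B) := Function.Embedding.nonempty_of_card_le (by simpa using hB)
  have nonadj {C : Finset V} (iC : ∀ u ∈ C, ∀ v ∈ C, u ≠ v → ¬ G.Adj u v) (x y : C) :
      ¬ G.Adj x y := fun hxy => iC x x.2 y y.2 hxy.ne hxy
  have adj (x : A) (y : B) : G.Adj x y := hAB x x.2 y y.2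
  refine h.false ⟨⟨Sum.elim (fun i => (f i : V)) (fun i => (g i : V)), ?_⟩, ?_⟩
  · refine Function.Injective.sumElim (Subtype.val_injective.comp f.injective)
      (Subtype.val_injective.comp g.injective) fun i j => (adj _ _).ne
  · rintro (i | i) (j | j)
    · simp [nonadj iA]
    · simp [adj]
    · simp [(adj _ _).symm]
    · simp [nonadj iB]

/-- A bound on the independent sets inside `s` bounds `setIndepNum G s`. -/
lemma setIndepNum_le {V : Type*} {G : SimpleGraph V} {s : Set V} {n : ℕ}
    (h : ∀ A : Finset V, ↑A ⊆ s → (∀ u ∈ A, ∀ v ∈ A, u ≠ v → ¬ G.Adj u v) → A.card ≤ n) :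
    setIndepNum G s ≤ n := by
  refine csSup_le ⟨0, ∅, by simp⟩ ?_
  rintro _ ⟨A, hA, iA, rfl⟩
  exact h A hA iA

lemma treeIndepNum_le {V : Type*} {G : SimpleGraph V} {n : ℕ} (D : TreeDecomp G)
    (h : ∀ i, setIndepNum G (D.bag i) ≤ n) : treeIndepNum G ≤ n :=
  Nat.sInf_le ⟨D, h⟩

/-- The tree decomposition with a single bag. -/
def TreeDecomp.trivial {V : Type*} (G : SimpleGraph V) : TreeDecomp G where
  ι := Unit
  T := ⊥
  tree := .of_subsingleton
  bag _ := Set.univ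
  bag_vert _ := ⟨(), Set.mem_univ _⟩
  bag_edge _ _ _ := ⟨(), Set.mem_univ _, Set.mem_univ _⟩
  bag_conn v :=
    haveI : Nonempty {_i : Unit | v ∈ (Set.univ : Set V)} := ⟨⟨(), Set.mem_univ _⟩⟩
    ⟨.of_subsingleton⟩

/-- If every vertex lies in exactly one bag of a family or in all of them, then any tree on the
index type gives a tree decomposition. -/
lemma exists_treeDecomp_of_bags {V ι : Type} [Nonempty ι] {G : SimpleGraph V} (bag : ι → Set V)
    (hv : ∀ v, ∃ i, v ∈ bag i) (he : ∀ u v, G.Adj u v → ∃ i, u ∈ bag i ∧ v ∈ bag i)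
    (hc : ∀ v i j, v ∈ bag i → v ∈ bag j → i ≠ j → ∀ k, v ∈ bag k) :
    ∃ D : TreeDecomp G, ∀ n, (∀ i, setIndepNum G (bag i) ≤ n) →
      ∀ i, setIndepNum G (D.bag i) ≤ n := by
  obtain ⟨T, -, hT⟩ := (connected_top (V := ι)).exists_isTree_le
  refine ⟨⟨ι, T, hT, bag, hv, he, fun v => ?_⟩, fun n h => h⟩
  obtain ⟨i, hi⟩ := hv v
  have : Nonempty {i | v ∈ bag i} := ⟨⟨i, hi⟩⟩
  by_cases hs : {i | v ∈ bag i}.Subsingleton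
  · have := hs.coe_sort
    exact ⟨.of_subsingleton⟩
  · obtain ⟨i, hi, j, hj, hij⟩ := Set.not_subsingleton_iff.1 hs
    have : {i | v ∈ bag i} = Set.univ := Set.eq_univ_of_forall (hc v i j hi hj hij)
    rw [this]
    exact (induceUnivIso T).connected_iff.2 hT.connected

/-- Let `t` be a positive integer and let `G` be a graph that is both
`(P_3 + P_1)`-free and `K_{t,t}`-free. Then `tree-α(G) ≤ t`. -/
theorem stmt_15 (t : ℕ) (ht : 0 < t) {V : Type} [Finite V] (G : SimpleGraph V)
    (h1 : IndFree P3plusP1 G)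
    (h2 : IndFree (completeBipartiteGraph (Fin t) (Fin t)) G) :
    treeIndepNum G ≤ t := by
  classical
  have := Fintype.ofFinite V
  by_cases hα : ∀ A : Finset V, (∀ u ∈ A, ∀ v ∈ A, u ≠ v → ¬ G.Adj u v) → A.card ≤ t
  · exact treeIndepNum_le (.trivial G) fun _ => setIndepNum_le fun A _ => hα A
  push Not at hα
  obtain ⟨A, iA, hA⟩ := hα
  -- a maximum independent set `S`, whose closed neighbourhoods are the bags
  obtain ⟨S, hS, hmax⟩ := Finset.exists_max_image
    {S : Finset V | ∀ u ∈ S, ∀ v ∈ S, u ≠ v → ¬ G.Adj u v} Finset.card ⟨A, by simpa using iA⟩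
  simp only [Finset.mem_filter, Finset.mem_univ, true_and] at hS hmax
  have hcard : t < S.card := hA.trans_le (hmax A iA)
  have indep {x y : V} (hx : x ∈ S) (hy : y ∈ S) : ¬ G.Adj x y :=
    fun h => hS x hx y hy h.ne h
  have hdom (v : V) : ∃ s ∈ S, v = s ∨ G.Adj v s := by
    by_contra! hv
    have hvS : v ∉ S := fun h => (hv v h).1 rfl
    have := hmax (insert v S) (by
      intro x hx y hy hxy
      rcases Finset.mem_insert.1 hx with rfl | hxS <;>
        rcases Finset.mem_insert.1 hy with rfl | hyS
      · exact absurd rfl hxy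
      · exact (hv y hyS).2
      · exact fun h => (hv x hxS).2 h.symm
      · exact indep hxS hyS)
    rw [Finset.card_insert_of_notMem hvS] at this
    omega
  have hall {v x y : V} (hx : x ∈ S) (hy : y ∈ S) (hxy : x ≠ y) (hvx : G.Adj v x)
      (hvy : G.Adj v y) (z : V) (hz : z ∈ S) : G.Adj v z := by
    by_contra hvz
    exact h1.false_of_path hvx.symm hvy hxy (indep hx hy) (indep hz hx)
      (fun h => hvz h.symm) (indep hz hy)
  have hone : 1 < S.card := by omega
  have : Nonempty S := (Finset.card_pos.1 (by omega : 0 < S.card)).to_subtype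
  obtain ⟨D, hD⟩ := exists_treeDecomp_of_bags (G := G)
    (fun s : S => {v | v = (s : V) ∨ G.Adj v s})
    (fun v => by obtain ⟨s, hs, h⟩ := hdom v; exact ⟨⟨s, hs⟩, h⟩)
    (by
      intro u v huv
      obtain ⟨x, hx, hux⟩ := hdom u
      obtain ⟨y, hy, hvy⟩ := hdom v
      by_contra! hno
      simp only [Set.mem_ofPred_eq, Subtype.forall, not_or] at hno
      have hvx := hno x hx hux
      have huy : ¬ (u = y ∨ G.Adj u y) := fun h => (hno y hy h).elim fun h₁ h₂ => hvy.elim h₁ h₂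
      rcases hux with rfl | hux
      · exact hvx.2 huv.symm
      rcases hvy with rfl | hvy
      · exact huy (.inr huv)
      have hxy : x ≠ y := by rintro rfl; exact hvx.2 hvy
      have h3 : 2 < S.card := by
        by_contra hle
        obtain rfl : t = 1 := by omega
        refine h2.false_of_biclique (A := {u}) (B := {v}) ?_ ?_ ?_ ?_ ?_ <;> simp [huv]
      obtain ⟨z, hz, hzxy⟩ := Finset.exists_mem_notMem_of_card_lt_card
        ((Finset.card_le_two (a := x) (b := y)).trans_lt h3)
      simp only [Finset.mem_insert, Finset.mem_singleton, not_or] at hzxy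
      have huz : ¬ G.Adj u z := fun h => huy (.inr (hall hx hz (Ne.symm hzxy.1) hux h y hy))
      have hvz : ¬ G.Adj v z := fun h => hvx.2 (hall hy hz (Ne.symm hzxy.2) hvy h x hx)
      exact h1.false_of_path hux.symm huv (fun h => hvx.1 h.symm) (fun h => hvx.2 h.symm)
        (indep hz hx) (fun h => huz h.symm) (fun h => hvz h.symm))
    (by
      rintro v ⟨x, hx⟩ ⟨y, hy⟩ hvx hvy hxy ⟨z, hz⟩
      simp only [ne_eq, Subtype.mk.injEq, Set.mem_ofPred_eq] at hvx hvy hxy ⊢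
      rcases hvx with rfl | hvx
      · exact hvy.elim (fun h => absurd h hxy) fun h => absurd h (indep hx hy)
      rcases hvy with rfl | hvy
      · exact absurd hvx (indep hy hx)
      exact .inr (hall hx hy hxy hvx hvy z hz))
  refine treeIndepNum_le D (hD t ?_)
  rintro ⟨s, hs⟩
  refine setIndepNum_le fun B hB iB => ?_
  by_cases hsB : s ∈ B
  · have : B ⊆ {s} := fun v hv => Finset.mem_singleton.2 <| by
      by_contra hne
      exact iB v hv s hsB hne ((hB hv).resolve_left hne)
    exact (Finset.card_le_card this).trans ((Finset.card_singleton s).trans_le ht)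
  have hadj {v : V} (hv : v ∈ B) : G.Adj v s :=
    (hB hv).resolve_left (by rintro rfl; exact hsB hv)
  have hfull : (B.filter fun v => ∀ x ∈ S, G.Adj v x).card < t := by
    by_contra! hle
    refine h2.false_of_biclique hle hcard.le ?_ hS ?_
    · exact fun u hu v hv => iB u (Finset.mem_filter.1 hu).1 v (Finset.mem_filter.1 hv).1
    · exact fun u hu => (Finset.mem_filter.1 hu).2
  have hpart : (B.filter fun v => ¬ ∀ x ∈ S, G.Adj v x).card ≤ 1 := by
    refine Finset.card_le_one.2 fun u hu v hv => ?_
    rw [Finset.mem_filter] at hu hv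
    by_contra huv
    obtain ⟨r, hr, hrs⟩ := Finset.exists_mem_ne hone s
    exact h1.false_of_path (hadj hu.1) (hadj hv.1).symm huv (iB u hu.1 v hv.1 huv)
      (fun h => hu.2 (hall hs hr hrs.symm (hadj hu.1) h.symm)) (indep hr hs)
      (fun h => hv.2 (hall hs hr hrs.symm (hadj hv.1) h.symm))
  have := B.card_filter_add_card_filter_not fun v => ∀ x ∈ S, G.Adj v x
  omega
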